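/- arXiv:1809.02947 — 4 statements merged into one kernel-verified Lean document; each statement's English description precedes it below -/
import Mathlib

section
/- Let a, b be integers with gcd(a,b) = 1 and let n ≥ 1. Let A_n be the n×n integer matrix with a on the diagonal, b on the subdiagonal, and 0 elsewhere. Then the Smith normal form of A_n is the diagonal matrix diag(1, 1, …, 1, aⁿ); that is, there exist matrices P, Q ∈ GL(n,ℤ) such that P·A_n·Q = diag(1, 1, …, 1, aⁿ). -/
/-! Suppose that row `i` of a matrix has `c` on the diagonal as its only nonzero entry, that row `j`
has only `b` in column `i` and `d` in column `j`, that column `i` vanishes in all other rows, and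
that `u * c + v * b = 1`. Then
`[u, v; -b, c] * [c, 0; b, d] * [1, -v * d; 0, 1] = [1, 0; 0, c * d]` splits off an invariant
factor `1`, the outer two matrices having determinant `1`. Doing this to consecutive rows of a
lower bidiagonal matrix, from the top down, accumulates the product of its diagonal in the last
corner. -/

open Matrix

/-- Equivalence of matrices, `P * A * Q = B` with `P` and `Q` invertible: the relation
which the Smith normal form classifies. -/
def MatrixEquivalent {m n R : Type*} [Fintype m] [DecidableEq m] [Fintype n] [DecidableEq n]
    [Semiring R] (A B : Matrix m n R) : Prop :=
  ∃ (P : (Matrix m m R)ˣ) (Q : (Matrix n n R)ˣ), (P : Matrix m m R) * A * (Q : Matrix n n R) = B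

namespace MatrixEquivalent

variable {m n R : Type*} [Fintype m] [DecidableEq m] [Fintype n] [DecidableEq n] [Semiring R]

theorem refl (A : Matrix m n R) : MatrixEquivalent A A :=
  ⟨1, 1, by simp⟩

theorem trans {A B C : Matrix m n R} (hAB : MatrixEquivalent A B) (hBC : MatrixEquivalent B C) :
    MatrixEquivalent A C := by
  obtain ⟨P, Q, rfl⟩ := hAB
  obtain ⟨P', Q', rfl⟩ := hBC
  exact ⟨P' * P, Q * Q', by simp [Matrix.mul_assoc]⟩

end MatrixEquivalent

section MixRows

variable {m n R : Type*} [DecidableEq m]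

/-- The row operation with coefficient matrix `[p, q; r, s]` on the rows `i` and `j`. If `i = j`,
only `r` and `s` matter. -/
def mixRows [Semiring R] (i j : m) (p q r s : R) (A : Matrix m n R) : Matrix m n R :=
  (A.updateRow i (p • A i + q • A j)).updateRow j (r • A i + s • A j)

theorem mixRows_mul [Semiring R] {l : Type*} [Fintype n] (i j : m) (p q r s : R)
    (A : Matrix m n R) (B : Matrix n l R) :
    mixRows i j p q r s A * B = mixRows i j p q r s (A * B) := by
  simp only [mixRows, updateRow_mul, add_vecMul, smul_vecMul, mul_apply_eq_vecMul]

theorem mixRows_mixRows_of_det_eq_one [CommRing R] {i j : m} (hij : i ≠ j) {p q r s : R}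
    (h : p * s - q * r = 1) (A : Matrix m n R) :
    mixRows i j s (-q) (-r) p (mixRows i j p q r s A) = A := by
  ext k l
  rcases eq_or_ne k j with rfl | hkj
  · simp only [mixRows, ne_eq, hij, not_false_eq_true, updateRow_ne, updateRow_self,
      Pi.add_apply, Pi.smul_apply, smul_eq_mul]
    linear_combination A k l * h
  rcases eq_or_ne k i with rfl | hki
  · simp only [mixRows, ne_eq, hij, not_false_eq_true, updateRow_ne, updateRow_self,
      Pi.add_apply, Pi.smul_apply, smul_eq_mul]
    linear_combination A k l * h
  · simp [mixRows, hkj, hki]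

theorem matrixEquivalent_mixRows [CommRing R] [Fintype m] [Fintype n] [DecidableEq n]
    {i j : m} (hij : i ≠ j) {p q r s : R} (h : p * s - q * r = 1) (A : Matrix m n R) :
    MatrixEquivalent A (mixRows i j p q r s A) := by
  have h' : s * p - -q * -r = 1 := by linear_combination h
  let P : (Matrix m m R)ˣ :=
    { val := mixRows i j p q r s 1
      inv := mixRows i j s (-q) (-r) p 1
      val_inv := by
        simpa only [mixRows_mul, Matrix.one_mul, neg_neg] using
          mixRows_mixRows_of_det_eq_one hij h' (1 : Matrix m m R)
      inv_val := by
        simpa only [mixRows_mul, Matrix.one_mul] using mixRows_mixRows_of_det_eq_one hij h 1 }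
  exact ⟨P, 1, by simp [P, mixRows_mul]⟩

end MixRows

section Pivot

variable {n R : Type*} [Fintype n] [DecidableEq n] [CommRing R] {i j : n}

theorem matrixEquivalent_mul_transvection {m : Type*} [Fintype m] [DecidableEq m] (hij : i ≠ j)
    (t : R) (A : Matrix m n R) :
    MatrixEquivalent A (A * transvection i j t) := by
  have hdet : IsUnit (transvection i j t) :=
    (isUnit_iff_isUnit_det _).mpr (by simp [det_transvection_of_ne i j hij])
  exact ⟨1, hdet.unit, by simp⟩

theorem mul_transvection_eq_updateRow {A : Matrix n n R} (hcol : ∀ k, k ≠ i → A k i = 0) (t : R) :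
    A * transvection i j t = A.updateRow i (A i + Pi.single j (A i i * t)) := by
  ext k l
  rcases eq_or_ne l j with rfl | hlj
  · rw [mul_transvection_apply_same]
    rcases eq_or_ne k i with rfl | hki
    · simp [mul_comm t]
    · simp [hki, hcol k hki]
  · rw [mul_transvection_apply_of_ne _ _ _ _ hlj]
    rcases eq_or_ne k i with rfl | hki
    · simp [hlj]
    · simp [hki]

theorem matrixEquivalent_updateRow_of_isCoprime (hij : i ≠ j) {b c d : R} (hcb : IsCoprime c b)
    {A : Matrix n n R} (hi : A i = Pi.single i c) (hj : A j = Pi.single i b + Pi.single j d)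
    (hcol : ∀ k, k ≠ i → k ≠ j → A k i = 0) :
    MatrixEquivalent A
      ((A.updateRow i (Pi.single i 1)).updateRow j (Pi.single j (c * d))) := by
  obtain ⟨u, v, huv⟩ := hcb
  have hdet : u * c - v * -b = 1 := by linear_combination huv
  have hrows : mixRows i j u v (-b) c A =
      (A.updateRow i (Pi.single i 1 + Pi.single j (v * d))).updateRow j
        (Pi.single j (c * d)) := by
    have hrow_i : u • A i + v • A j = Pi.single i 1 + Pi.single j (v * d) := by
      simp only [hi, hj, smul_add, ← Pi.single_smul, smul_eq_mul, ← huv, Pi.single_add, add_assoc]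
    have hrow_j : -b • A i + c • A j = Pi.single j (c * d) := by
      simp only [hi, hj, smul_add, ← Pi.single_smul, smul_eq_mul, ← add_assoc, ← Pi.single_add]
      simp [mul_comm b c]
    rw [mixRows, hrow_i, hrow_j]
  have hcols : mixRows i j u v (-b) c A * transvection i j (-(v * d)) =
      (A.updateRow i (Pi.single i 1)).updateRow j (Pi.single j (c * d)) := by
    have hcol' : ∀ k, k ≠ i → mixRows i j u v (-b) c A k i = 0 := by
      intro k hki
      rw [hrows]
      rcases eq_or_ne k j with rfl | hkj
      · rw [updateRow_self, Pi.single_eq_of_ne hij]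
      · rw [updateRow_ne hkj, updateRow_ne hki, hcol k hki hkj]
    rw [mul_transvection_eq_updateRow hcol', hrows, updateRow_comm _ hij.symm, updateRow_idem]
    simp [hij, add_assoc, ← Pi.single_add]
  rw [← hcols]
  exact (matrixEquivalent_mixRows hij hdet A).trans (matrixEquivalent_mul_transvection hij _ _)

end Pivot

section LowerBidiagonal

variable {R : Type*} {n : ℕ}

/-- The lower bidiagonal matrix with diagonal `d` and subdiagonal `e`. Subdiagonal entries are
indexed by their row, so `e 0` does not occur. -/
def lowerBidiagonal [Zero R] (d e : Fin n → R) : Matrix (Fin n) (Fin n) R :=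
  of fun i j => if i = j then d i else if (i : ℕ) = j + 1 then e i else 0

theorem lowerBidiagonal_row_of_val_eq_succ [AddZeroClass R] (d e : Fin n → R) {i j : Fin n}
    (hij : (j : ℕ) = i + 1) :
    lowerBidiagonal d e j = Pi.single i (e j) + Pi.single j (d j) := by
  ext l
  simp only [lowerBidiagonal, of_apply, Pi.add_apply, Pi.single_apply, Fin.ext_iff]
  split_ifs <;> first | omega | simp

/-- The stage of the elimination of `lowerBidiagonal d e` at which the pivot has reached row `k`:
the rows above are those of the identity, the pivot is the product of the diagonal up to row `k`,
and the rows below are untouched. -/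
def eliminationStage [CommMonoidWithZero R] (d e : Fin n → R) (k : ℕ) : Matrix (Fin n) (Fin n) R :=
  of fun i =>
    if (i : ℕ) < k then Pi.single i 1
    else if (i : ℕ) = k then Pi.single i (∏ j ∈ Finset.Iic i, d j)
    else lowerBidiagonal d e i

section Rows

variable [CommMonoidWithZero R] (d e : Fin n → R) {i : Fin n} {k : ℕ}

theorem eliminationStage_row_of_lt (hik : (i : ℕ) < k) :
    eliminationStage d e k i = Pi.single i 1 :=
  if_pos hik

theorem eliminationStage_row_of_eq (hik : (i : ℕ) = k) :
    eliminationStage d e k i = Pi.single i (∏ j ∈ Finset.Iic i, d j) :=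
  (if_neg hik.not_lt).trans (if_pos hik)

theorem eliminationStage_row_of_gt (hik : k < i) :
    eliminationStage d e k i = lowerBidiagonal d e i :=
  (if_neg hik.not_gt).trans (if_neg hik.ne')

end Rows

theorem eliminationStage_zero [CommMonoidWithZero R] (d e : Fin n → R) :
    eliminationStage d e 0 = lowerBidiagonal d e := by
  funext i
  rcases Nat.eq_zero_or_pos i with hi | hi
  · have hIic : Finset.Iic i = {i} := by
      ext j
      simp only [Finset.mem_Iic, Finset.mem_singleton, Fin.le_def, Fin.ext_iff]
      omega
    rw [eliminationStage_row_of_eq d e hi, hIic, Finset.prod_singleton]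
    ext l
    simp [lowerBidiagonal, hi, Pi.single_apply, eq_comm]
  · exact eliminationStage_row_of_gt d e hi

theorem eliminationStage_pred [CommMonoidWithZero R] (d e : Fin n → R) :
    eliminationStage d e (n - 1) =
      diagonal fun i : Fin n => if (i : ℕ) + 1 = n then ∏ j, d j else 1 := by
  ext i l
  by_cases hi : (i : ℕ) + 1 = n
  · have hIic : Finset.Iic i = Finset.univ := by
      ext j
      simp only [Finset.mem_Iic, Finset.mem_univ, iff_true, Fin.le_def]
      omega
    rw [eliminationStage_row_of_eq d e (by omega), hIic]
    simp [hi, diagonal_apply, Pi.single_apply, eq_comm (a := l)]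
  · rw [eliminationStage_row_of_lt d e (by omega)]
    simp [hi, diagonal_apply, Pi.single_apply, eq_comm (a := l)]

theorem eliminationStage_succ [CommMonoidWithZero R] (d e : Fin n → R) {i j : Fin n}
    (hij : (j : ℕ) = i + 1) :
    eliminationStage d e j =
      ((eliminationStage d e i).updateRow i (Pi.single i 1)).updateRow j
        (Pi.single j ((∏ l ∈ Finset.Iic i, d l) * d j)) := by
  have hprod : ∏ l ∈ Finset.Iic j, d l = (∏ l ∈ Finset.Iic i, d l) * d j := by
    have hIio : Finset.Iio j = Finset.Iic i := by
      ext l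
      simp only [Finset.mem_Iio, Finset.mem_Iic, Fin.lt_def, Fin.le_def]
      omega
    rw [← Finset.Iio_insert, Finset.prod_insert Finset.notMem_Iio_self, hIio, mul_comm]
  funext k
  rcases eq_or_ne k j with rfl | hkj
  · rw [eliminationStage_row_of_eq d e rfl, hprod, updateRow_self]
  rcases eq_or_ne k i with rfl | hki
  · rw [eliminationStage_row_of_lt d e (by omega), updateRow_ne hkj, updateRow_self]
  rw [updateRow_ne hkj, updateRow_ne hki]
  rcases hki.lt_or_gt with hk | hk
  · rw [eliminationStage_row_of_lt d e (by omega), eliminationStage_row_of_lt d e hk]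
  · rw [eliminationStage_row_of_gt d e (by omega), eliminationStage_row_of_gt d e hk]

theorem matrixEquivalent_eliminationStage_succ [CommRing R] {d e : Fin n → R}
    (h : ∀ i j, i < j → IsCoprime (d i) (e j)) {i j : Fin n} (hij : (j : ℕ) = i + 1) :
    MatrixEquivalent (eliminationStage d e i) (eliminationStage d e j) := by
  have hlt : i < j := by omega
  have hcoprime : IsCoprime (∏ l ∈ Finset.Iic i, d l) (e j) :=
    IsCoprime.prod_left fun l hl => h l j ((Finset.mem_Iic.mp hl).trans_lt hlt)
  have hrow_j : eliminationStage d e i j = Pi.single i (e j) + Pi.single j (d j) := by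
    rw [eliminationStage_row_of_gt d e hlt, lowerBidiagonal_row_of_val_eq_succ d e hij]
  have hcol : ∀ k, k ≠ i → k ≠ j → eliminationStage d e i k i = 0 := by
    intro k hki hkj
    rcases hki.lt_or_gt with hk | hk
    · rw [eliminationStage_row_of_lt d e hk, Pi.single_eq_of_ne hki.symm]
    · have hk' : (k : ℕ) ≠ i + 1 := by omega
      rw [eliminationStage_row_of_gt d e hk]
      simp [lowerBidiagonal, hki, hk']
  rw [eliminationStage_succ d e hij]
  exact matrixEquivalent_updateRow_of_isCoprime hlt.ne hcoprime
    (eliminationStage_row_of_eq d e rfl) hrow_j hcol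

theorem matrixEquivalent_lowerBidiagonal_eliminationStage [CommRing R] {d e : Fin n → R}
    (h : ∀ i j, i < j → IsCoprime (d i) (e j)) {k : ℕ} (hk : k ≤ n - 1) :
    MatrixEquivalent (lowerBidiagonal d e) (eliminationStage d e k) := by
  induction k with
  | zero => exact eliminationStage_zero d e ▸ .refl _
  | succ k ih =>
    exact (ih (by omega)).trans <| matrixEquivalent_eliminationStage_succ h
      (i := ⟨k, by omega⟩) (j := ⟨k + 1, by omega⟩) rfl

end LowerBidiagonal

theorem stmt8_general {R : Type*} [CommRing R] {n : ℕ} (d e : Fin n → R)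
    (h : ∀ i j, i < j → IsCoprime (d i) (e j)) :
    MatrixEquivalent (lowerBidiagonal d e)
      (diagonal fun i : Fin n => if (i : ℕ) + 1 = n then ∏ j, d j else 1) :=
  eliminationStage_pred d e ▸ matrixEquivalent_lowerBidiagonal_eliminationStage h le_rfl

/-- Smith normal form of the `n × n` matrix with `a` on the diagonal and `b` on the
subdiagonal, for coprime `a, b`: there are `P, Q ∈ GL(n,ℤ)` with
`P * Aₙ * Q = diag(1, …, 1, aⁿ)`. -/
theorem stmt8 (a b : ℤ) (h : Int.gcd a b = 1) (n : ℕ) (hn : 1 ≤ n) :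
    ∃ P Q : (Matrix (Fin n) (Fin n) ℤ)ˣ,
      (P : Matrix (Fin n) (Fin n) ℤ) *
          (Matrix.of fun i j : Fin n =>
            if i = j then a else if (i : ℕ) = (j : ℕ) + 1 then b else 0) *
          (Q : Matrix (Fin n) (Fin n) ℤ) =
        Matrix.diagonal (fun i : Fin n => if (i : ℕ) + 1 = n then a ^ n else 1) := by
  simpa only [MatrixEquivalent, lowerBidiagonal, Finset.prod_const, Finset.card_univ,
    Fintype.card_fin] using
    stmt8_general (fun _ : Fin n => a) (fun _ => b) fun _ _ _ => Int.isCoprime_iff_gcd_eq_one.mpr h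
end

section
/- Let m, n be integers with gcd(m,n) = 1 and m ≠ n, and let c ≥ 1. Set s = ē₁ ∈ A_c(m,n). Then s generates the cyclic group A_c(m,n) (of order |n−m|^c), and there exists an integer ν with ψ(s) = s^ν (equivalently t⁻¹ s t = s^ν in G_c(m,n)) such that gcd(ν, n−m) = 1 and ν·m ≡ n (mod |n−m|^c). -/
noncomputable section

def shiftN (c : ℕ) : Matrix (Fin c) (Fin c) ℤ :=
  Matrix.of fun i j => if (i : ℕ) = (j : ℕ) + 1 then 1 else 0

def Mphi (c : ℕ) (m n : ℤ) : Matrix (Fin c) (Fin c) ℤ := (n - m) • 1 + (-m) • shiftN c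

def Mpsi (c : ℕ) : Matrix (Fin c) (Fin c) ℤ := 1 + shiftN c

lemma commute_Mpsi_Mphi (c : ℕ) (m n : ℤ) : Commute (Mpsi c) (Mphi c m n) := by
  unfold Mpsi Mphi
  simp only [mul_add, add_mul, Commute, SemiconjBy]
  simp only [mul_smul_comm, smul_mul_assoc, one_mul, mul_one]
  abel

lemma det_Mpsi (c : ℕ) : (Mpsi c).det = 1 := by
  have h : (Mpsi c).BlockTriangular (OrderDual.toDual) := by
    intro i j hij
    simp only [Mpsi, shiftN, Matrix.add_apply, Matrix.one_apply, Matrix.of_apply]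
    have : i < j := hij
    rw [if_neg (by omega), if_neg (by omega)]
    simp
  rw [Matrix.det_of_lowerTriangular _ h]
  apply Finset.prod_eq_one
  intro i _
  simp [Mpsi, shiftN, Matrix.one_apply]

def MpsiUnit (c : ℕ) : (Matrix (Fin c) (Fin c) ℤ)ˣ :=
  ((Matrix.isUnit_iff_isUnit_det _).2 (by rw [det_Mpsi]; exact isUnit_one)).unit

lemma MpsiUnit_coe (c : ℕ) : (MpsiUnit c : Matrix (Fin c) (Fin c) ℤ) = Mpsi c :=
  IsUnit.unit_spec _

/-- ψ as an additive automorphism of ℤ^c. -/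
def psiEquiv (c : ℕ) : (Fin c → ℤ) ≃+ (Fin c → ℤ) where
  toFun := (Mpsi c).mulVec
  invFun := ((MpsiUnit c)⁻¹ : (Matrix (Fin c) (Fin c) ℤ)ˣ).val.mulVec
  left_inv := fun v => by
    rw [Matrix.mulVec_mulVec]
    rw [show ((MpsiUnit c)⁻¹ : (Matrix (Fin c) (Fin c) ℤ)ˣ).val * Mpsi c = 1 by
      rw [← MpsiUnit_coe]; exact Units.inv_mul _]
    exact Matrix.one_mulVec v
  right_inv := fun v => by
    rw [Matrix.mulVec_mulVec]
    rw [show Mpsi c * ((MpsiUnit c)⁻¹ : (Matrix (Fin c) (Fin c) ℤ)ˣ).val = 1 by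
      rw [← MpsiUnit_coe]; exact Units.mul_inv _]
    exact Matrix.one_mulVec v
  map_add' := fun x y => Matrix.mulVec_add _ x y

/-- The range of φ, as an additive subgroup of ℤ^c. -/
def phiRange (c : ℕ) (m n : ℤ) : AddSubgroup (Fin c → ℤ) :=
  (LinearMap.range (Mphi c m n).mulVecLin).toAddSubgroup

/-- The abelian group A_c(m,n) = ℤ^c / Im φ. -/
abbrev Ac (c : ℕ) (m n : ℤ) : Type := (Fin c → ℤ) ⧸ phiRange c m n

lemma map_phiRange (c : ℕ) (m n : ℤ) :
    (phiRange c m n).map (psiEquiv c : (Fin c → ℤ) →+ (Fin c → ℤ)) = phiRange c m n := by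
  have hcomm := commute_Mpsi_Mphi c m n
  ext x
  constructor
  · rintro ⟨y, ⟨z, rfl⟩, rfl⟩
    refine ⟨(Mpsi c).mulVec z, ?_⟩
    show (Mphi c m n).mulVec ((Mpsi c).mulVec z) = _
    show _ = (Mpsi c).mulVec ((Mphi c m n).mulVec z)
    rw [Matrix.mulVec_mulVec, Matrix.mulVec_mulVec, hcomm.eq]
  · rintro ⟨z, rfl⟩
    have hinv : Commute (((MpsiUnit c)⁻¹ : (Matrix (Fin c) (Fin c) ℤ)ˣ) : Matrix (Fin c) (Fin c) ℤ)
        (Mphi c m n) := by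
      have : Commute ((MpsiUnit c : Matrix (Fin c) (Fin c) ℤ)) (Mphi c m n) := by
        rw [MpsiUnit_coe]; exact hcomm
      exact this.units_inv_left
    refine ⟨(Mphi c m n).mulVec (((MpsiUnit c)⁻¹ :
      (Matrix (Fin c) (Fin c) ℤ)ˣ).val.mulVec z), ⟨_, rfl⟩, ?_⟩
    show (Mpsi c).mulVec _ = (Mphi c m n).mulVec z
    rw [Matrix.mulVec_mulVec, Matrix.mulVec_mulVec, hcomm.eq, mul_assoc,
      show Mpsi c * ((MpsiUnit c)⁻¹ : (Matrix (Fin c) (Fin c) ℤ)ˣ).val = 1 by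
        rw [← MpsiUnit_coe]; exact Units.mul_inv _, mul_one]


/-- The automorphism ψ induced on A_c(m,n). -/
def psiA (c : ℕ) (m n : ℤ) : Ac c m n ≃+ Ac c m n :=
  QuotientAddGroup.congr (phiRange c m n) (phiRange c m n) (psiEquiv c) (map_phiRange c m n)

/-- The action of ⟨t⟩ ≅ ℤ on A_c(m,n), with t⁻¹ a t = ψ(a). -/
def GcAct (c : ℕ) (m n : ℤ) : Multiplicative ℤ →* MulAut (Multiplicative (Ac c m n)) :=
  zpowersHom _ (AddEquiv.toMultiplicative (psiA c m n))⁻¹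

/-- The group G_c(m,n) = A_c(m,n) ⋊ ⟨t⟩. -/
abbrev Gc (c : ℕ) (m n : ℤ) : Type :=
  SemidirectProduct (Multiplicative (Ac c m n)) (Multiplicative ℤ) (GcAct c m n)

/-- The element t of G_c(m,n). -/
def tGen (c : ℕ) (m n : ℤ) : Gc c m n := SemidirectProduct.inr (Multiplicative.ofAdd 1)

/-- The image ē_i of the i-th standard basis vector in A_c(m,n). -/
def eA (c : ℕ) (m n : ℤ) (i : Fin c) : Ac c m n :=
  QuotientAddGroup.mk (Pi.single i 1)

/-- The element ē_i viewed in G_c(m,n). -/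
def eG (c : ℕ) (m n : ℤ) (i : Fin c) : Gc c m n :=
  SemidirectProduct.inl (Multiplicative.ofAdd (eA c m n i))

end

/-!
As `φ = n - m ψ`, the relation `m ψ(a) = n a` holds in `A_c(m,n)`, and `det φ = (n - m)^c` kills
`A_c(m,n)`. Hence an inverse `p` of `m` modulo `(n - m)^c` turns `ψ` into multiplication by
`ν = p n`. Every subgroup is then `ψ`-stable, and since `ē_{i+1} = ψ(ē_i) - ē_i`, the only one
containing `ē₁` is the whole group.
-/

section MatrixCokernel

variable {ι : Type*} [Fintype ι] [DecidableEq ι]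

lemma det_smul_mem_range_mulVecLin {R : Type*} [CommRing R] (M : Matrix ι ι R) (v : ι → R) :
    M.det • v ∈ LinearMap.range M.mulVecLin :=
  ⟨M.adjugate.mulVec v, by
    rw [Matrix.mulVecLin_apply, Matrix.mulVec_mulVec, Matrix.mul_adjugate, Matrix.smul_mulVec,
      Matrix.one_mulVec]⟩

lemma card_quotient_range_mulVecLin {M : Matrix ι ι ℤ} (hM : M.det ≠ 0) :
    Nat.card ((ι → ℤ) ⧸ LinearMap.range M.mulVecLin) = M.det.natAbs := by
  have hinj : Function.Injective M.mulVecLin := Matrix.mulVec_injective_of_det_ne_zero hM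
  rw [← Submodule.natAbs_det_equiv _ (LinearEquiv.ofInjective M.mulVecLin hinj),
    ← LinearMap.det_toLin' M]
  rfl

end MatrixCokernel

lemma zsmul_eq_zsmul_of_modEq {G : Type*} [AddGroup G] {x : G} {a b k : ℤ} (hx : k • x = 0)
    (hab : a ≡ b [ZMOD k]) : a • x = b • x :=
  zsmul_eq_zsmul_iff_modEq.2 (hab.of_dvd (addOrderOf_dvd_iff_zsmul_eq_zero.2 hx))

lemma exists_mul_modEq_one {a k : ℤ} (h : IsCoprime a k) : ∃ b : ℤ, b * a ≡ 1 [ZMOD k] := by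
  obtain ⟨b, q, hbq⟩ := h
  exact ⟨b, Int.modEq_iff_dvd.2 ⟨q, by linear_combination -hbq⟩⟩

lemma isCoprime_of_mul_modEq {a b d k : ℤ} (hd : IsCoprime d k) (h : a * b ≡ d [ZMOD k]) :
    IsCoprime a k := by
  obtain ⟨q, hq⟩ := h.dvd
  have hab : IsCoprime (a * b) k := by
    have := hd.add_mul_right_left (-q)
    rwa [show d + -q * k = a * b by linear_combination hq] at this
  exact hab.of_mul_left_left

lemma Mphi_eq_smul_one_sub_smul_Mpsi (c : ℕ) (m n : ℤ) :
    Mphi c m n = n • 1 - m • Mpsi c := by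
  rw [Mphi, Mpsi]
  module

lemma Mphi_apply {c : ℕ} (m n : ℤ) (i j : Fin c) :
    Mphi c m n i j = (if i = j then n - m else 0) + if (i : ℕ) = j + 1 then -m else 0 := by
  simp only [Mphi, shiftN, Matrix.add_apply, Matrix.smul_apply, Matrix.of_apply,
    Matrix.one_apply, smul_eq_mul, mul_ite, mul_one, mul_zero]

lemma det_Mphi (c : ℕ) (m n : ℤ) : (Mphi c m n).det = (n - m) ^ c := by
  have hlower : (Mphi c m n).IsLowerTriangular := by
    intro i j (hij : i < j)
    rw [Mphi_apply, if_neg hij.ne, if_neg (by lia), add_zero]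
  have hdiag (i : Fin c) : Mphi c m n i i = n - m := by
    simp [Mphi_apply]
  rw [Matrix.det_of_isLowerTriangular _ hlower]
  simp only [hdiag, Finset.prod_const, Finset.card_univ, Fintype.card_fin]

lemma Mpsi_mulVec_single {c : ℕ} {i j : Fin c} (hij : (j : ℕ) = i + 1) :
    (Mpsi c).mulVec (Pi.single i 1) = Pi.single i 1 + Pi.single j 1 := by
  rw [Mpsi, Matrix.add_mulVec, Matrix.one_mulVec]
  congr 1
  ext k
  simp [shiftN, Pi.single_apply, Fin.ext_iff, hij]

namespace Ac

variable {c : ℕ} {m n : ℤ}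

lemma card_eq (hmn : m ≠ n) : Nat.card (Ac c m n) = (n - m).natAbs ^ c := by
  have hdet : (Mphi c m n).det ≠ 0 := by
    rw [det_Mphi]
    exact pow_ne_zero c (sub_ne_zero.2 hmn.symm)
  rw [← Int.natAbs_pow, ← det_Mphi]
  exact card_quotient_range_mulVecLin hdet

lemma pow_zsmul_eq_zero (a : Ac c m n) : (n - m) ^ c • a = 0 := by
  obtain ⟨v, rfl⟩ := QuotientAddGroup.mk_surjective a
  rw [← QuotientAddGroup.mk_zsmul, QuotientAddGroup.eq_zero_iff, ← det_Mphi]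
  exact det_smul_mem_range_mulVecLin (Mphi c m n) v

lemma psiA_mk (v : Fin c → ℤ) :
    psiA c m n (v : Ac c m n) = ((Mpsi c).mulVec v : Fin c → ℤ) :=
  rfl

lemma zsmul_psiA (a : Ac c m n) : m • psiA c m n a = n • a := by
  obtain ⟨v, rfl⟩ := QuotientAddGroup.mk_surjective a
  rw [psiA_mk, ← QuotientAddGroup.mk_zsmul, ← QuotientAddGroup.mk_zsmul, QuotientAddGroup.eq]
  refine ⟨v, ?_⟩
  rw [Matrix.mulVecLin_apply, Mphi_eq_smul_one_sub_smul_Mpsi, Matrix.sub_mulVec,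
    Matrix.smul_mulVec, Matrix.smul_mulVec, Matrix.one_mulVec, sub_eq_neg_add]

lemma psiA_eq_zsmul {p : ℤ} (hp : p * m ≡ 1 [ZMOD (n - m) ^ c]) (a : Ac c m n) :
    psiA c m n a = (p * n) • a :=
  calc psiA c m n a
    _ = (p * m) • psiA c m n a := by
      rw [zsmul_eq_zsmul_of_modEq (pow_zsmul_eq_zero _) hp, one_zsmul]
    _ = (p * n) • a := by rw [mul_zsmul, zsmul_psiA, mul_zsmul]

lemma psiA_eA {i j : Fin c} (hij : (j : ℕ) = i + 1) :
    psiA c m n (eA c m n i) = eA c m n i + eA c m n j := by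
  simp only [eA, psiA_mk, Mpsi_mulVec_single hij, QuotientAddGroup.mk_add]

lemma mk_eq_sum_zsmul_eA (v : Fin c → ℤ) : (v : Ac c m n) = ∑ i, v i • eA c m n i := by
  conv_lhs => rw [pi_eq_sum_univ' v]
  simp only [eA, ← QuotientAddGroup.mk_zsmul, QuotientAddGroup.mk_sum]

lemma eq_top_of_forall_psiA_mem {H : AddSubgroup (Ac c m n)} (hc : 0 < c)
    (hzero : eA c m n ⟨0, hc⟩ ∈ H) (hpsi : ∀ a ∈ H, psiA c m n a ∈ H) : H = ⊤ := by
  have hbasis (k : ℕ) (hk : k < c) : eA c m n ⟨k, hk⟩ ∈ H := by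
    induction k with
    | zero => exact hzero
    | succ k ih =>
      have hsum := hpsi _ (ih (by lia))
      rw [psiA_eA (j := ⟨k + 1, hk⟩) rfl] at hsum
      exact (H.add_mem_cancel_left (ih _)).1 hsum
  refine (AddSubgroup.eq_top_iff' H).2 fun a => ?_
  obtain ⟨v, rfl⟩ := QuotientAddGroup.mk_surjective a
  rw [mk_eq_sum_zsmul_eA]
  exact H.sum_mem fun i _ => H.zsmul_mem (hbasis i i.2) _

lemma zmultiples_eA_zero_eq_top (hc : 0 < c) (hm : IsCoprime m (n - m)) :
    AddSubgroup.zmultiples (eA c m n ⟨0, hc⟩) = ⊤ := by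
  obtain ⟨p, hp⟩ := exists_mul_modEq_one (hm.pow_right (n := c))
  refine eq_top_of_forall_psiA_mem hc (AddSubgroup.mem_zmultiples _) fun a ha => ?_
  rw [psiA_eq_zsmul hp]
  exact AddSubgroup.zsmul_mem _ ha _

end Ac

/-- For `gcd(m,n) = 1`, `m ≠ n` and `c ≥ 1`, with `s = ē₁`: `s` generates the cyclic group
`A_c(m,n)` of order `|n-m|^c`, and there is `ν` with `ψ(s) = ν • s` (equivalently
`t⁻¹ s t = s^ν` in `G_c(m,n)`), `gcd(ν, n-m) = 1` and `ν·m ≡ n (mod |n-m|^c)`. -/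
theorem stmt10 (m n : ℤ) (h : Int.gcd m n = 1) (hmn : m ≠ n) (c : ℕ) (hc : 1 ≤ c) :
    AddSubgroup.zmultiples (eA c m n ⟨0, hc⟩) = ⊤ ∧
    Nat.card (Ac c m n) = (n - m).natAbs ^ c ∧
    ∃ ν : ℤ, psiA c m n (eA c m n ⟨0, hc⟩) = ν • eA c m n ⟨0, hc⟩ ∧
      Int.gcd ν (n - m) = 1 ∧
      ν * m ≡ n [ZMOD (((n - m).natAbs : ℤ) ^ c)] := by
  have hm : IsCoprime m (n - m) := by
    simpa [sub_eq_add_neg] using (Int.isCoprime_iff_gcd_eq_one.2 h).add_mul_left_right (-1)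
  have hn : IsCoprime n (n - m) := by
    simpa using hm.add_mul_left_left 1
  obtain ⟨p, hp⟩ := exists_mul_modEq_one (hm.pow_right (n := c))
  have hmod : p * n * m ≡ n [ZMOD (n - m) ^ c] := by
    simpa [mul_right_comm] using hp.mul_right n
  refine ⟨Ac.zmultiples_eA_zero_eq_top hc hm, Ac.card_eq hmn, p * n,
    Ac.psiA_eq_zsmul hp _, ?_, ?_⟩
  · rw [← Int.isCoprime_iff_gcd_eq_one]
    exact isCoprime_of_mul_modEq hn (hmod.of_dvd (dvd_pow_self _ (Nat.one_le_iff_ne_zero.1 hc)))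
  · rwa [← Nat.cast_pow, ← Int.natAbs_pow, Int.modEq_natAbs]
end

section
/- Let m, n be integers with gcd(m,n) = 1 and m ≠ n, and let c ≥ 1. Let φ be an automorphism of G_c(m,n). Since A_c(m,n) is the torsion subgroup of G_c(m,n) and hence characteristic, φ induces an automorphism φ̄ of the infinite cyclic quotient G_c(m,n)/A_c(m,n) = ⟨t⟩. Then the Reidemeister number R(φ) is finite if and only if φ̄(t) = t⁻¹. -/
/-- The twisted conjugacy (Reidemeister) equivalence relation of an endomorphism `φ`:
`x ∼ y ↔ ∃ z, x = z * y * (φ z)⁻¹`. -/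
def twistedConj {G : Type*} [Group G] (φ : G →* G) : Setoid G where
  r x y := ∃ z : G, x = z * y * (φ z)⁻¹
  iseqv := by
    constructor
    · exact fun x => ⟨1, by simp⟩
    · rintro x y ⟨z, rfl⟩
      exact ⟨z⁻¹, by simp [mul_assoc]⟩
    · rintro x y z ⟨u, rfl⟩ ⟨v, rfl⟩
      exact ⟨u * v, by simp [mul_assoc]⟩

/-- A group `G` has the `R∞`–property if every automorphism has infinitely many
twisted conjugacy classes. -/
def HasRInfty (G : Type*) [Group G] : Prop :=
  ∀ φ : G ≃* G, Infinite (Quotient (twistedConj φ.toMonoidHom))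

/-!
An automorphism `φ` of a group `G` maps the kernel of a surjection `p : G → ℤ` into itself as soon
as that kernel is finite, because `ℤ` is torsion-free. The finite kernel is invisible to the
finiteness of the Reidemeister number, so `R(φ)` is finite if and only if the induced automorphism
`± 1` of `ℤ` has finite Reidemeister number. The twisted conjugacy classes of an endomorphism `ψ`
of an abelian group are the cosets of the image of `x ↦ x - ψ x`; for `ψ = 1` this image is trivial,
and for `ψ = -1` it is `2ℤ`. For `G_c(m,n)` the kernel is the cokernel of a matrix of determinant
`(n - m) ^ c ≠ 0`, hence finite.
-/

lemma le_ker_of_isMulTorsion {G K : Type*} [Group G] [Group K] [IsMulTorsionFree K]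
    {N : Subgroup G} (hN : IsMulTorsion N) (f : G →* K) : N ≤ f.ker := fun x hx =>
  (isOfFinOrder_iff_eq_one _).1 ((f.comp N.subtype).isOfFinOrder (hN ⟨x, hx⟩))

section Cyclic

variable {H : Type*}

lemma isMulTorsionFree_of_infinite_isCyclic [Group H] [Infinite H] [IsCyclic H] :
    IsMulTorsionFree H :=
  Function.Injective.isMulTorsionFree (intCyclicMulEquiv (G := H)).symm.toMonoidHom
    (intCyclicMulEquiv (G := H)).symm.injective

lemma eq_or_eq_inv_of_zpowers_eq_top [Group H] [Infinite H] {g h : H}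
    (hg : Subgroup.zpowers g = ⊤) (hh : Subgroup.zpowers h = ⊤) : h = g ∨ h = g⁻¹ := by
  obtain ⟨a, rfl⟩ : h ∈ Subgroup.zpowers g := hg ▸ Subgroup.mem_top h
  obtain ⟨b, hb⟩ : g ∈ Subgroup.zpowers (g ^ a) := hh ▸ Subgroup.mem_top g
  have hab : a * b = 1 := (zpowersHom_bijective hg).injective <|
    (zpow_mul g a b).trans (hb.trans (zpow_one g).symm)
  rcases Int.isUnit_iff.1 (IsUnit.of_mul_eq_one b hab) with rfl | rfl
  · exact .inl (zpow_one g)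
  · exact .inr (zpow_neg_one g)

lemma hom_ext_of_zpowers_eq_top {K : Type*} [Group H] [Group K] {g : H}
    (hg : Subgroup.zpowers g = ⊤) {f f' : H →* K} (h : f g = f' g) : f = f' :=
  MonoidHom.eq_of_eqOn_dense (s := {g}) (by rw [← Subgroup.zpowers_eq_closure, hg]) <|
    Set.eqOn_singleton.2 h

lemma eq_id_or_eq_inv_of_surjective [CommGroup H] [Infinite H] [IsCyclic H] {ψ : H →* H}
    (hψ : Function.Surjective ψ) : ψ = MonoidHom.id H ∨ ψ = invMonoidHom := by
  obtain ⟨g, hg⟩ := isCyclic_iff_exists_zpowers_eq_top.1 ‹IsCyclic H›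
  have hψg : Subgroup.zpowers (ψ g) = ⊤ := by
    rw [← MonoidHom.map_zpowers, hg, ← MonoidHom.range_eq_map, MonoidHom.range_eq_top.2 hψ]
  exact (eq_or_eq_inv_of_zpowers_eq_top hg hψg).imp
    (hom_ext_of_zpowers_eq_top hg) (hom_ext_of_zpowers_eq_top hg)

end Cyclic

namespace twistedConj

section Map

variable {G H : Type*} [Group G] [Group H] {p : G →* H} {φ : G →* G} {ψ : H →* H}

lemma finite_quotient_of_surjective (hp : Function.Surjective p) (h : ∀ x, p (φ x) = ψ (p x))
    [Finite (Quotient (twistedConj φ))] : Finite (Quotient (twistedConj ψ)) := by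
  have hmap : ∀ x y, twistedConj φ x y → twistedConj ψ (p x) (p y) := by
    rintro _ y ⟨z, rfl⟩
    exact ⟨p z, by simp [h]⟩
  exact Finite.of_surjective (Quotient.map p hmap) (Quotient.map_surjective hmap hp)

-- A class of `φ` contains an element above any prescribed element of its image class.
lemma finite_quotient_of_finite_ker (hp : Function.Surjective p) (h : ∀ x, p (φ x) = ψ (p x))
    [Finite p.ker] [Finite (Quotient (twistedConj ψ))] : Finite (Quotient (twistedConj φ)) := by
  let reps : Set H := Set.range (Quotient.out : Quotient (twistedConj ψ) → H)
  have hfiber (y : H) : (p ⁻¹' {y}).Finite := by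
    obtain ⟨x, rfl⟩ := hp y
    exact (p.fiberEquivKer x).finite_iff.2 ‹_›
  have hpre : Finite (p ⁻¹' reps) := (Set.finite_range _).preimage' fun y _ => hfiber y
  refine Finite.of_surjective (fun x : p ⁻¹' reps => Quotient.mk (twistedConj φ) x) fun q => ?_
  obtain ⟨x, rfl⟩ := Quotient.exists_rep q
  obtain ⟨w, hw⟩ := Quotient.mk_out (s := twistedConj ψ) (p x)
  obtain ⟨z, rfl⟩ := hp w
  exact ⟨⟨z * x * (φ z)⁻¹, Quotient.mk _ (p x), by simpa [h] using hw⟩, Quotient.sound ⟨z, rfl⟩⟩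

theorem finite_quotient_iff_of_finite_ker (hp : Function.Surjective p)
    (h : ∀ x, p (φ x) = ψ (p x)) [Finite p.ker] :
    Finite (Quotient (twistedConj φ)) ↔ Finite (Quotient (twistedConj ψ)) :=
  ⟨fun _ => finite_quotient_of_surjective hp h, fun _ => finite_quotient_of_finite_ker hp h⟩

end Map

section Comm

variable {H : Type*} [CommGroup H]

lemma eq_leftRel (ψ : H →* H) :
    twistedConj ψ = QuotientGroup.leftRel (MonoidHom.id H / ψ).range := by
  ext x y
  rw [QuotientGroup.leftRel_apply]
  constructor
  · rintro ⟨z, rfl⟩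
    exact ⟨z⁻¹, by simp [div_eq_mul_inv, mul_comm, mul_assoc]⟩
  · rintro ⟨z, hz⟩
    obtain rfl : y = x * (z / ψ z) := inv_mul_eq_iff_eq_mul.1 hz.symm
    exact ⟨z⁻¹, by simp [div_eq_mul_inv, mul_comm z⁻¹, mul_assoc]⟩

lemma finite_quotient_iff_finiteIndex (ψ : H →* H) :
    Finite (Quotient (twistedConj ψ)) ↔ (MonoidHom.id H / ψ).range.FiniteIndex := by
  rw [eq_leftRel, Subgroup.finiteIndex_iff_finite_quotient]
  rfl

lemma infinite_quotient_id [Infinite H] : Infinite (Quotient (twistedConj (MonoidHom.id H))) := by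
  rw [← not_finite_iff_infinite, finite_quotient_iff_finiteIndex, div_self', MonoidHom.range_one,
    Subgroup.not_finiteIndex_iff, Subgroup.index_bot, Nat.card_eq_zero_of_infinite]

lemma finite_quotient_inv [Group.FG H] :
    Finite (Quotient (twistedConj (invMonoidHom : H →* H))) := by
  have hsq : MonoidHom.id H / invMonoidHom = powMonoidHom 2 := by
    ext x
    simp [sq]
  rw [finite_quotient_iff_finiteIndex, hsq]
  exact Subgroup.finiteIndex_range_powMonoidHom_of_fg H two_ne_zero

lemma finite_quotient_iff_eq_inv [Infinite H] [IsCyclic H] {ψ : H →* H}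
    (hψ : Function.Surjective ψ) :
    Finite (Quotient (twistedConj ψ)) ↔ ψ = invMonoidHom := by
  refine ⟨fun hfin => (eq_id_or_eq_inv_of_surjective hψ).resolve_left ?_, ?_⟩
  · rintro rfl
    exact not_finite_iff_infinite.2 infinite_quotient_id hfin
  · rintro rfl
    have : Group.FG H := Group.fg_of_surjective
      (f := (intCyclicMulEquiv (G := H)).toMonoidHom) intCyclicMulEquiv.surjective
    exact finite_quotient_inv

end Comm

theorem finite_quotient_iff_map_eq_inv {G H : Type*} [Group G] [CommGroup H] [Infinite H]
    {p : G →* H} [Finite p.ker] {φ : G →* G} (hφ : Function.Surjective φ) {t : G}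
    (ht : Subgroup.zpowers (p t) = ⊤) :
    Finite (Quotient (twistedConj φ)) ↔ p (φ t) = (p t)⁻¹ := by
  have : IsCyclic H := isCyclic_iff_exists_zpowers_eq_top.2 ⟨p t, ht⟩
  have : IsMulTorsionFree H := isMulTorsionFree_of_infinite_isCyclic
  have hp : Function.Surjective p := MonoidHom.range_eq_top.1 <| top_le_iff.1 <|
    ht ▸ Subgroup.zpowers_le.2 ⟨t, rfl⟩
  have hker : p.ker ≤ (p.comp φ).ker := le_ker_of_isMulTorsion isMulTorsion_of_finite _
  let ψ : H →* H := p.liftOfSurjective hp ⟨p.comp φ, hker⟩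
  have hψ (x : G) : p (φ x) = ψ (p x) :=
    (p.liftOfRightInverse_comp_apply _ _ ⟨p.comp φ, hker⟩ x).symm
  have hψ_surj : Function.Surjective ψ :=
    .of_comp (g := p) (by simpa only [Function.comp_def, hψ] using hp.comp hφ)
  rw [finite_quotient_iff_of_finite_ker hp hψ, finite_quotient_iff_eq_inv hψ_surj, hψ]
  exact ⟨fun h => DFunLike.congr_fun h _, fun h => hom_ext_of_zpowers_eq_top ht h⟩

end twistedConj

lemma finite_quotient_range_mulVecLin {ι : Type*} [Fintype ι] [DecidableEq ι] {M : Matrix ι ι ℤ}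
    (hM : M.det ≠ 0) : Finite ((ι → ℤ) ⧸ (LinearMap.range M.mulVecLin).toAddSubgroup) := by
  have hinj : Function.Injective M.mulVecLin := Matrix.mulVec_injective_of_det_ne_zero hM
  exact AddSubgroup.finiteIndex_iff_finite_quotient.1
    ⟨Int.submodule_toAddSubgroup_index_ne_zero_iff.2 ⟨(LinearEquiv.ofInjective _ hinj).symm⟩⟩

lemma finite_Ac (c : ℕ) {m n : ℤ} (hmn : m ≠ n) : Finite (Ac c m n) :=
  finite_quotient_range_mulVecLin <| by
    rw [det_Mphi]
    exact pow_ne_zero c (sub_ne_zero.2 hmn.symm)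

lemma finite_ker_rightHom {N G : Type*} [Group N] [Group G] [Finite N] (α : G →* MulAut N) :
    Finite (SemidirectProduct.rightHom (φ := α)).ker := by
  rw [← SemidirectProduct.range_inl_eq_ker_rightHom]
  exact Set.finite_range SemidirectProduct.inl

theorem stmt11_general (m n : ℤ) (hmn : m ≠ n) (c : ℕ) (φ : Gc c m n ≃* Gc c m n) :
    Finite (Quotient (twistedConj φ.toMonoidHom)) ↔
      SemidirectProduct.rightHom (φ (tGen c m n)) = (Multiplicative.ofAdd (1 : ℤ))⁻¹ := by
  have : Finite (Ac c m n) := finite_Ac c hmn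
  have : Finite (SemidirectProduct.rightHom (φ := GcAct c m n)).ker := finite_ker_rightHom _
  have ht : Subgroup.zpowers (SemidirectProduct.rightHom (tGen c m n)) = ⊤ := by
    rw [tGen, SemidirectProduct.rightHom_inr]
    exact (Subgroup.eq_top_iff' _).2 fun k => ⟨k.toAdd, by simp [← ofAdd_zsmul]⟩
  exact twistedConj.finite_quotient_iff_map_eq_inv φ.surjective ht

/-- For `gcd(m,n) = 1`, `m ≠ n`, `c ≥ 1` and any automorphism `φ` of `G_c(m,n)`:
the Reidemeister number `R(φ)` is finite iff the automorphism induced by `φ` on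
`G_c(m,n)/A_c(m,n) = ⟨t⟩` sends `t` to `t⁻¹` (identifying the quotient with `⟨t⟩` via
`SemidirectProduct.rightHom`). -/
theorem stmt11 (m n : ℤ) (h : Int.gcd m n = 1) (hmn : m ≠ n) (c : ℕ) (hc : 1 ≤ c)
    (φ : Gc c m n ≃* Gc c m n) :
    Finite (Quotient (twistedConj φ.toMonoidHom)) ↔
      SemidirectProduct.rightHom (φ (tGen c m n)) = (Multiplicative.ofAdd (1 : ℤ))⁻¹ :=
  stmt11_general m n hmn c φ
end

section
/- Let m, n be integers with 0 < m ≤ |n| and m ≠ n, let d = gcd(m,n) and let c ≥ 1. Then the subgroup d·A_c(m,n) of A_c(m,n) is invariant under the automorphism ψ, so (d·A_c(m,n)) ⋊ ⟨t⟩ is a subgroup of G_c(m,n), and this subgroup is isomorphic to G_c(m/d, n/d). -/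
/-!
Since `Mphi c (d * m) (d * n) = d • Mphi c m n`, the image of `φ` for `(dm, dn)` is `d` times the
image for `(m, n)`. As `ℤ^c` is torsion-free, for `d ≠ 0` multiplication by `d` therefore induces an
embedding of `A_c(m, n)` into `A_c(dm, dn)` with image `d·A_c(dm, dn)`. It commutes with `ψ`, so it
extends, fixing `t`, to an embedding of `G_c(m, n)` into `G_c(dm, dn)`.
-/

lemma quotientAddGroup_map_injective {G H : Type*} [AddGroup G] [AddGroup H] {N : AddSubgroup G}
    [N.Normal] {M : AddSubgroup H} [M.Normal] {f : G →+ H} (h : N = M.comap f) :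
    Function.Injective (QuotientAddGroup.map N M f h.le) := by
  rw [← AddMonoidHom.ker_eq_bot_iff, QuotientAddGroup.ker_map, ← h, QuotientAddGroup.map_mk'_self]

lemma range_quotientAddGroup_map_zsmul {G : Type*} [AddCommGroup G] {N M : AddSubgroup G} {d : ℤ}
    (h : N ≤ M.comap (zsmulAddGroupHom d)) :
    (QuotientAddGroup.map N M (zsmulAddGroupHom d) h).range =
      (zsmulAddGroupHom d : G ⧸ M →+ G ⧸ M).range := by
  ext x
  simp only [AddMonoidHom.mem_range, QuotientAddGroup.mk_surjective.exists]
  rfl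

lemma map_zpow_smul_of_map_smul {G H α β : Type*} [Group G] [Group H] [MulAction G α]
    [MulAction H β] {f : α → β} {a : G} {b : H} (h : ∀ x, f (a • x) = b • f x) (k : ℤ) (x : α) :
    f (a ^ k • x) = b ^ k • f x := by
  induction k generalizing x with
  | zero => simp only [zpow_zero, one_smul]
  | succ k ih => rw [zpow_add_one, zpow_add_one, mul_smul, mul_smul, ih, h]
  | pred k ih =>
    have map_inv_smul : f (a⁻¹ • x) = b⁻¹ • f x := by
      rw [eq_inv_smul_iff, ← h, smul_inv_smul]
    rw [zpow_sub_one, zpow_sub_one, mul_smul, mul_smul, ih, map_inv_smul]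

section SemidirectProduct

variable {N₁ N₂ G₁ G₂ : Type*} [Group N₁] [Group N₂] [Group G₁] [Group G₂]
  {φ₁ : G₁ →* MulAut N₁} {φ₂ : G₂ →* MulAut N₂} {fn : N₁ →* N₂} {fg : G₁ →* G₂}
  {h : ∀ g, fn.comp (φ₁ g).toMonoidHom = (φ₂ (fg g)).toMonoidHom.comp fn}

lemma semidirectProduct_map_injective (hn : Function.Injective fn) (hg : Function.Injective fg) :
    Function.Injective (SemidirectProduct.map fn fg h) := fun _ _ hxy =>
  SemidirectProduct.ext (hn (congrArg SemidirectProduct.left hxy))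
    (hg (congrArg SemidirectProduct.right hxy))

lemma mem_range_semidirectProduct_map {g : SemidirectProduct N₂ G₂ φ₂} :
    g ∈ (SemidirectProduct.map fn fg h).range ↔ g.left ∈ fn.range ∧ g.right ∈ fg.range := by
  constructor
  · rintro ⟨x, rfl⟩
    exact ⟨⟨x.left, rfl⟩, ⟨x.right, rfl⟩⟩
  · rintro ⟨⟨a, ha⟩, ⟨b, hb⟩⟩
    exact ⟨⟨a, b⟩, SemidirectProduct.ext ha hb⟩

end SemidirectProduct

lemma Mphi_mul (c : ℕ) (d m n : ℤ) : Mphi c (d * m) (d * n) = d • Mphi c m n := by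
  simp only [Mphi, smul_add, smul_smul, mul_sub, mul_neg]

lemma phiRange_mul (c : ℕ) (d m n : ℤ) :
    phiRange c (d * m) (d * n) = (phiRange c m n).map (zsmulAddGroupHom d) := by
  ext v
  simp only [phiRange, Mphi_mul, Submodule.mem_toAddSubgroup, LinearMap.mem_range,
    Matrix.mulVecLin_apply, Matrix.smul_mulVec, AddSubgroup.mem_map, exists_exists_eq_and,
    zsmulAddGroupHom_apply]

lemma phiRange_le_comap_zsmul (c : ℕ) (d m n : ℤ) :
    phiRange c m n ≤ (phiRange c (d * m) (d * n)).comap (zsmulAddGroupHom d) :=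
  AddSubgroup.map_le_iff_le_comap.1 (phiRange_mul c d m n).ge

lemma phiRange_eq_comap_zsmul (c : ℕ) {d : ℤ} (hd : d ≠ 0) (m n : ℤ) :
    phiRange c m n = (phiRange c (d * m) (d * n)).comap (zsmulAddGroupHom d) := by
  rw [phiRange_mul, AddSubgroup.comap_map_eq_self_of_injective]
  exact smul_right_injective _ hd

/-- The homomorphism `A_c(m,n) → A_c(dm,dn)` induced by multiplication by `d` on `ℤ^c`; it embeds
`A_c(m,n)` as `d·A_c(dm,dn)` when `d ≠ 0`. -/
noncomputable def scaleAc (c : ℕ) (d m n : ℤ) : Ac c m n →+ Ac c (d * m) (d * n) :=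
  QuotientAddGroup.map _ _ (zsmulAddGroupHom d) (phiRange_le_comap_zsmul c d m n)

lemma scaleAc_injective (c : ℕ) {d : ℤ} (hd : d ≠ 0) (m n : ℤ) :
    Function.Injective (scaleAc c d m n) :=
  quotientAddGroup_map_injective (phiRange_eq_comap_zsmul c hd m n)

lemma range_scaleAc (c : ℕ) (d m n : ℤ) :
    (scaleAc c d m n).range =
      (zsmulAddGroupHom d : Ac c (d * m) (d * n) →+ Ac c (d * m) (d * n)).range :=
  range_quotientAddGroup_map_zsmul _

lemma scaleAc_psiA (c : ℕ) (d m n : ℤ) (x : Ac c m n) :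
    scaleAc c d m n (psiA c m n x) = psiA c (d * m) (d * n) (scaleAc c d m n x) := by
  induction x using QuotientAddGroup.induction_on with
  | H v => exact congrArg QuotientAddGroup.mk (map_zsmul (psiEquiv c) d v).symm

lemma scaleAc_GcAct (c : ℕ) (d m n : ℤ) (k : Multiplicative ℤ) (x : Multiplicative (Ac c m n)) :
    (scaleAc c d m n).toMultiplicative (GcAct c m n k x) =
      GcAct c (d * m) (d * n) k ((scaleAc c d m n).toMultiplicative x) := by
  simp only [GcAct, zpowersHom_apply, inv_zpow']
  exact map_zpow_smul_of_map_smul (f := (scaleAc c d m n).toMultiplicative)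
    (a := AddEquiv.toMultiplicative (psiA c m n))
    (b := AddEquiv.toMultiplicative (psiA c (d * m) (d * n))) (scaleAc_psiA c d m n) _ x

/-- The homomorphism `G_c(m,n) → G_c(dm,dn)` that is `scaleAc` on `A_c(m,n)` and fixes `t`; it
embeds `G_c(m,n)` as `(d·A_c(dm,dn)) ⋊ ⟨t⟩` when `d ≠ 0`. -/
noncomputable def scaleGc (c : ℕ) (d m n : ℤ) : Gc c m n →* Gc c (d * m) (d * n) :=
  SemidirectProduct.map (scaleAc c d m n).toMultiplicative (MonoidHom.id _) fun k =>
    MonoidHom.ext (scaleAc_GcAct c d m n k)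

lemma scaleGc_injective (c : ℕ) {d : ℤ} (hd : d ≠ 0) (m n : ℤ) :
    Function.Injective (scaleGc c d m n) :=
  semidirectProduct_map_injective (scaleAc_injective c hd m n) Function.injective_id

lemma coe_range_scaleGc (c : ℕ) (d m n : ℤ) :
    ((scaleGc c d m n).range : Set (Gc c (d * m) (d * n))) =
      {g | Multiplicative.toAdd g.left ∈
        (zsmulAddGroupHom d : Ac c (d * m) (d * n) →+ Ac c (d * m) (d * n)).range} := by
  ext g
  rw [← range_scaleAc]
  exact mem_range_semidirectProduct_map.trans (and_iff_left ⟨g.right, rfl⟩)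

theorem stmt17_general (c : ℕ) {d m n : ℤ} (hd : d ≠ 0) (hm : d ∣ m) (hn : d ∣ n) :
    (∀ x ∈ (zsmulAddGroupHom d : Ac c m n →+ Ac c m n).range,
        psiA c m n x ∈ (zsmulAddGroupHom d : Ac c m n →+ Ac c m n).range) ∧
    ∃ S : Subgroup (Gc c m n),
      (S : Set (Gc c m n)) = {g : Gc c m n | Multiplicative.toAdd g.left ∈
          (zsmulAddGroupHom d : Ac c m n →+ Ac c m n).range} ∧
      Nonempty (S ≃* Gc c (m / d) (n / d)) := by
  constructor
  · rintro _ ⟨y, rfl⟩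
    exact ⟨psiA c m n y, (map_zsmul (psiA c m n) d y).symm⟩
  · obtain ⟨m, rfl⟩ := hm
    obtain ⟨n, rfl⟩ := hn
    rw [Int.mul_ediv_cancel_left m hd, Int.mul_ediv_cancel_left n hd]
    exact ⟨(scaleGc c d m n).range, coe_range_scaleGc c d m n,
      ⟨(MonoidHom.ofInjective (scaleGc_injective c hd m n)).symm⟩⟩

/-- For `0 < m ≤ |n|`, `m ≠ n`, `d = gcd(m,n)` and `c ≥ 1`: the subgroup `d·A_c(m,n)`
(the range of multiplication by `d`) is invariant under `ψ`, and the subgroup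
`(d·A_c(m,n)) ⋊ ⟨t⟩` of `G_c(m,n)` (the subgroup of elements whose `A_c(m,n)`-component
lies in `d·A_c(m,n)`) is isomorphic to `G_c(m/d, n/d)`. -/
theorem stmt17 (m n : ℤ) (hm : 0 < m) (hmabs : m ≤ |n|) (hmn : m ≠ n) (c : ℕ)
    (hc : 1 ≤ c) :
    (∀ x ∈ (zsmulAddGroupHom (Int.gcd m n : ℤ) : Ac c m n →+ Ac c m n).range,
        psiA c m n x ∈ (zsmulAddGroupHom (Int.gcd m n : ℤ) : Ac c m n →+ Ac c m n).range) ∧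
    ∃ S : Subgroup (Gc c m n),
      (S : Set (Gc c m n)) = {g : Gc c m n | Multiplicative.toAdd g.left ∈
          (zsmulAddGroupHom (Int.gcd m n : ℤ) : Ac c m n →+ Ac c m n).range} ∧
      Nonempty (S ≃* Gc c (m / (Int.gcd m n : ℤ)) (n / (Int.gcd m n : ℤ))) :=
  stmt17_general c (Int.natCast_ne_zero.2 (Int.gcd_ne_zero_left hm.ne')) (Int.gcd_dvd_left m n)
    (Int.gcd_dvd_right m n)
end
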